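/- Let Φ be a stationary random measure on ℝ^d with intensity λ_Φ ∈ (0,∞), and let h : ℝ^d × ℝ^d → [0,∞] be a measurable function satisfying h(x + t, y + t) = h(x, y) for all x, y, t and ∫_{ℝ^d} h(x, y) dx = 1 for every y. Then λ_Φ = E[∫ h(0, z) dΦ(z)], and the unique disintegrating measure Q of the Campbell measure (i.e. the unique σ-finite Q on M(ℝ^d) with E[∫ g(x, T_xΦ) dΦ(x)] = ∫_{ℝ^d} ∫ g(x, ψ) dQ(ψ) dx for all measurable g ≥ 0) is given explicitly by Q(B) = E[∫ 1_B(T_zΦ) h(0, z) dΦ(z)] for every measurable B ⊆ M(ℝ^d). -/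

import Mathlib

open MeasureTheory ENNReal

noncomputable section

/-- `ℝ^d`. -/
abbrev Vec (d : ℕ) := Fin d → ℝ

/-- The shift `T_t ψ`, defined by `(T_t ψ)(A) = ψ(A + t)`. -/
def shiftM {d : ℕ} (t : Vec d) (ψ : Measure (Vec d)) : Measure (Vec d) :=
  ψ.map (fun x => x - t)

/-- A measure is in `M(ℝ^d)` iff it is finite on bounded sets. -/
def BddFinite {d : ℕ} (ψ : Measure (Vec d)) : Prop :=
  ∀ s : Set (Vec d), Bornology.IsBounded s → ψ s < ⊤

/-- Translation covariance of `g : M(ℝ^d) × ℝ^d × ℝ^d → [0,∞]`. -/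
def Covariant3 {d : ℕ} (g : Measure (Vec d) → Vec d → Vec d → ℝ≥0∞) : Prop :=
  ∀ (t x y : Vec d) (ψ : Measure (Vec d)), g (shiftM t ψ) (x - t) (y - t) = g ψ x y

/-- A random measure `Ψ` on a probability space `(Ω, P)` is mass-stationary if the mass
transport principle holds for every translation-covariant measurable `g`. -/
def MassStationary {d : ℕ} {Ω : Type*} [MeasurableSpace Ω] (P : Measure Ω)
    (Ψ : Ω → Measure (Vec d)) : Prop :=
  ∀ g : Measure (Vec d) → Vec d → Vec d → ℝ≥0∞,
    Measurable (fun p : Measure (Vec d) × Vec d × Vec d => g p.1 p.2.1 p.2.2) →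
    Covariant3 g →
    ∫⁻ ω, (∫⁻ y, g (Ψ ω) 0 y ∂(Ψ ω)) ∂P = ∫⁻ ω, (∫⁻ y, g (Ψ ω) y 0 ∂(Ψ ω)) ∂P

/-- The unit box `[0,1)^d`. -/
def unitBox (d : ℕ) : Set (Vec d) := Set.univ.pi fun _ : Fin d => Set.Ico (0 : ℝ) 1

open ProbabilityTheory in
/-- A kernel that is a countable sum of pointwise finite kernels is s-finite. -/
lemma sfin_of_finite {α β : Type*} [MeasurableSpace α] [MeasurableSpace β] (κ : Kernel α β)
    (hκ : ∀ a, κ a Set.univ < ⊤) : IsSFiniteKernel κ := by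
  have hm : Measurable fun a => κ a Set.univ := κ.measurable_coe MeasurableSet.univ
  have hm1 : Measurable fun a => (1 + κ a Set.univ)⁻¹ := (hm.const_add 1).inv
  have hηm : Measurable fun a => (1 + κ a Set.univ)⁻¹ • κ a := by
    refine Measure.measurable_of_measurable_coe _ fun s hs => ?_
    simp only [Measure.smul_apply, smul_eq_mul]
    exact hm1.mul (κ.measurable_coe hs)
  let η : Kernel α β := ⟨_, hηm⟩
  have hη : ∀ a, η a = (1 + κ a Set.univ)⁻¹ • κ a := fun a => rfl
  have : IsFiniteKernel η := ⟨⟨1, ENNReal.one_lt_top, fun a => by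
    rw [hη, Measure.smul_apply, smul_eq_mul, mul_comm, ← div_eq_mul_inv]
    exact ENNReal.div_le_of_le_mul (by rw [one_mul]; exact le_add_self)⟩⟩
  have hd : Measurable (Function.uncurry fun (a : α) (_ : β) => 1 + κ a Set.univ) :=
    (hm.const_add 1).comp measurable_fst
  have : κ = η.withDensity (fun a _ => 1 + κ a Set.univ) := by
    ext1 a
    rw [Kernel.withDensity_apply _ hd, withDensity_const, hη, smul_smul,
      ENNReal.mul_inv_cancel, one_smul]
    · simp
    · exact (ENNReal.add_lt_top.2 ⟨ENNReal.one_lt_top, hκ a⟩).ne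
  rw [this]
  refine Kernel.IsSFiniteKernel.withDensity η fun a _ => ?_
  exact (ENNReal.add_lt_top.2 ⟨ENNReal.one_lt_top, hκ a⟩).ne

lemma bddFinite_iff {d : ℕ} (ψ : Measure (Vec d)) :
    BddFinite ψ ↔ ∀ n : ℕ, ψ (Metric.ball 0 n) < ⊤ := by
  constructor
  · intro H n
    exact H _ Metric.isBounded_ball
  · intro H s hs
    obtain ⟨r, hr⟩ := hs.subset_ball 0
    obtain ⟨n, hn⟩ := exists_nat_ge r
    exact (measure_mono (hr.trans (Metric.ball_subset_ball hn))).trans_lt (H n)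

lemma measurableSet_bddFinite {d : ℕ} : MeasurableSet {ψ : Measure (Vec d) | BddFinite ψ} := by
  simp only [bddFinite_iff, Set.ofPred_forall]
  exact MeasurableSet.iInter fun n =>
    measurableSet_lt (Measure.measurable_coe measurableSet_ball) measurable_const

open ProbabilityTheory Classical in
/-- The identity kernel on bounded-finite measures, zero elsewhere. -/
def cutK (d : ℕ) : Kernel (Measure (Vec d)) (Vec d) :=
  Kernel.piecewise (measurableSet_bddFinite (d := d)) ⟨id, measurable_id⟩ 0

lemma cutK_of {d : ℕ} {ψ : Measure (Vec d)} (hψ : BddFinite ψ) : cutK d ψ = ψ := by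
  classical
  exact if_pos (c := ψ ∈ {ψ | BddFinite ψ}) hψ

lemma cutK_not {d : ℕ} {ψ : Measure (Vec d)} (hψ : ¬ BddFinite ψ) : cutK d ψ = 0 := by
  classical
  exact if_neg (c := ψ ∈ {ψ | BddFinite ψ}) hψ

lemma cutK_bdd {d : ℕ} (ψ : Measure (Vec d)) : BddFinite (cutK d ψ) := by
  by_cases hψ : BddFinite ψ
  · rwa [cutK_of hψ]
  · rw [cutK_not hψ]; intro s _; simp

open ProbabilityTheory in
instance cutK_sfin {d : ℕ} : IsSFiniteKernel (cutK d) := by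
  let A : ℕ → Set (Vec d) := disjointed fun n : ℕ => Metric.ball (0 : Vec d) n
  have hA : ∀ n, MeasurableSet (A n) := MeasurableSet.disjointed fun n => measurableSet_ball
  have hU : ⋃ n, A n = Set.univ := by
    rw [iUnion_disjointed, Metric.iUnion_ball_nat]
  have hs : cutK d = Kernel.sum fun n => (cutK d).restrict (hA n) := by
    ext1 ψ
    rw [Kernel.sum_apply]
    simp only [Kernel.restrict_apply]
    rw [← Measure.restrict_iUnion (disjoint_disjointed _) hA, hU, Measure.restrict_univ]
  rw [hs]
  refine @Kernel.isSFiniteKernel_sum _ _ _ _ _ _ _ fun n => sfin_of_finite _ fun ψ => ?_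
  rw [Kernel.restrict_apply, Measure.restrict_apply_univ]
  exact cutK_bdd ψ _ (Metric.isBounded_ball.subset (disjointed_subset _ n))

lemma measurable_shiftM {d : ℕ} (t : Vec d) : Measurable (shiftM t) :=
  Measure.measurable_map _ (measurable_sub_const' t)

lemma shiftM_bdd {d : ℕ} (t : Vec d) {ψ : Measure (Vec d)} (hψ : BddFinite ψ) :
    BddFinite (shiftM t ψ) := by
  rw [bddFinite_iff]
  intro n
  rw [shiftM, Measure.map_apply (measurable_sub_const' t) measurableSet_ball]
  refine hψ _ ?_
  refine (Metric.isBounded_ball (x := t) (r := n)).subset fun x hx => ?_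
  simpa [dist_eq_norm] using hx

lemma shiftM_shiftM {d : ℕ} (s t : Vec d) (ψ : Measure (Vec d)) :
    shiftM s (shiftM t ψ) = shiftM (s + t) ψ := by
  rw [shiftM, shiftM, shiftM, Measure.map_map (measurable_sub_const' s)
    (measurable_sub_const' t)]
  congr 1
  ext x i
  simp
  ring

lemma measurable_shift_cut {d : ℕ} :
    Measurable fun p : Measure (Vec d) × Vec d => shiftM p.2 (cutK d p.1) := by
  refine Measure.measurable_of_measurable_coe _ fun s hs => ?_
  have : ∀ p : Measure (Vec d) × Vec d, shiftM p.2 (cutK d p.1) s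
      = ((cutK d).prodMkRight (Vec d)) p (Prod.mk p ⁻¹'
        {q : (Measure (Vec d) × Vec d) × Vec d | q.2 - q.1.2 ∈ s}) := by
    intro p
    rw [shiftM, Measure.map_apply (measurable_sub_const' p.2) hs]
    rfl
  simp only [this]
  refine ProbabilityTheory.Kernel.measurable_kernel_prodMk_left ?_
  exact (measurable_snd.sub measurable_fst.snd) hs

open ProbabilityTheory in
/-- Key lemma. -/
lemma palm_key {d : ℕ} {Ω : Type*} [MeasurableSpace Ω] (P : Measure Ω)
    (Φ : Ω → Measure (Vec d)) (hΦm : Measurable Φ)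
    (hbf : ∀ᵐ ω ∂P, BddFinite (Φ ω))
    (hstat : ∀ t : Vec d, P.map (fun ω => shiftM t (Φ ω)) = P.map Φ)
    (hfin : (∫⁻ ω, Φ ω (unitBox d) ∂P) < ⊤)
    (B : Set (Measure (Vec d))) (hB : MeasurableSet B) :
    ∃ c : ℝ≥0∞, ∀ f : Vec d → ℝ≥0∞, Measurable f →
      ∫⁻ ω, (∫⁻ z, B.indicator (fun _ => (1 : ℝ≥0∞)) (shiftM z (Φ ω)) * f z ∂(Φ ω)) ∂P
        = c * ∫⁻ z, f z := by
  let D : Measure (Vec d) → Vec d → ℝ≥0∞ := fun ψ z =>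
    B.indicator (fun _ => (1 : ℝ≥0∞)) (shiftM z (cutK d ψ))
  have hD : Measurable (Function.uncurry D) :=
    (measurable_const.indicator hB).comp measurable_shift_cut
  let L := P.map Φ
  have hLbf : ∀ᵐ ψ ∂L, BddFinite ψ :=
    (ae_map_iff hΦm.aemeasurable measurableSet_bddFinite).2 hbf
  have hL : ∀ t, L.map (shiftM t) = L := fun t => by
    change (P.map Φ).map (shiftM t) = P.map Φ
    rw [Measure.map_map (measurable_shiftM t) hΦm]
    exact hstat t
  let μ : Measure (Vec d) := L.bind ((cutK d).withDensity D)
  have hμ : ∀ f : Vec d → ℝ≥0∞, Measurable f →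
      ∫⁻ z, f z ∂μ = ∫⁻ ψ, ∫⁻ z, D ψ z * f z ∂(cutK d ψ) ∂L := by
    intro f hf
    rw [Measure.lintegral_bind (Kernel.aemeasurable _) hf.aemeasurable]
    refine lintegral_congr fun ψ => ?_
    rw [Kernel.lintegral_withDensity _ hD _ hf]
  have hmeasF : ∀ f : Vec d → ℝ≥0∞, Measurable f →
      Measurable fun ψ => ∫⁻ z, D ψ z * f z ∂(cutK d ψ) := by
    intro f hf
    exact Measurable.lintegral_kernel_prod_right (f := fun ψ z => D ψ z * f z)
      (hD.mul (hf.comp measurable_snd))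
  have hμ' : ∀ f : Vec d → ℝ≥0∞, Measurable f →
      ∫⁻ ω, (∫⁻ z, B.indicator (fun _ => (1 : ℝ≥0∞)) (shiftM z (Φ ω)) * f z ∂(Φ ω)) ∂P
       = ∫⁻ z, f z ∂μ := by
    intro f hf
    rw [hμ f hf, lintegral_map (hmeasF f hf) hΦm]
    refine lintegral_congr_ae ?_
    filter_upwards [hbf] with ω hω
    simp only [D, cutK_of hω]
  have hinv : μ.IsAddLeftInvariant := by
    refine ⟨fun t => ?_⟩
    refine Measure.ext_of_lintegral _ fun f hf => ?_
    have hft : Measurable fun z => f (t + z) := hf.comp (measurable_const_add t)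
    rw [lintegral_map hf (measurable_const_add t), hμ _ hft, hμ _ hf]
    conv_rhs => rw [← hL (-t), lintegral_map (hmeasF f hf) (measurable_shiftM _)]
    refine lintegral_congr_ae ?_
    filter_upwards [hLbf] with ψ hψ
    have hm : Measurable fun x : Vec d => x - -t := measurable_sub_const' _
    have hg : Measurable fun z => D (shiftM (-t) ψ) z * f z :=
      (hD.comp measurable_prodMk_left).mul hf
    rw [cutK_of hψ, cutK_of (shiftM_bdd _ hψ)]
    conv_rhs => rw [shiftM]
    rw [lintegral_map (by simpa only [shiftM] using hg) hm]
    refine lintegral_congr fun z => ?_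
    have e : z - -t = t + z := by rw [sub_neg_eq_add, add_comm]
    change _ = D (shiftM (-t) ψ) (z - -t) * f (z - -t)
    simp only [D]
    rw [cutK_of hψ, cutK_of (shiftM_bdd _ hψ), shiftM_shiftM, e]
    congr 4
    simp
  have hbox : MeasurableSet (unitBox d) :=
    MeasurableSet.univ_pi fun _ => measurableSet_Ico
  have hbox_fin : μ (unitBox d) ≠ ⊤ := by
    rw [← lintegral_indicator_one hbox, ← hμ' _ (measurable_one.indicator hbox)]
    refine (lt_of_le_of_lt (lintegral_mono fun ω => ?_) hfin).ne
    rw [← lintegral_indicator_one hbox]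
    refine lintegral_mono fun z => ?_
    refine mul_le_of_le_one_left' ?_
    exact Set.indicator_le_self' (by simp) _
  have hint : (interior (unitBox d)).Nonempty := by
    rw [unitBox, interior_pi_set Set.finite_univ]
    refine ⟨fun _ => 1 / 2, fun i _ => ?_⟩
    rw [interior_Ico]
    norm_num
  have : IsFiniteMeasureOnCompacts μ := ⟨fun K hK =>
    measure_lt_top_of_isCompact_of_isAddLeftInvariant' hint hbox_fin hK⟩
  have hs := Measure.isAddLeftInvariant_eq_smul μ (volume : Measure (Vec d))
  refine ⟨(Measure.addHaarScalarFactor μ (volume : Measure (Vec d)) : ℝ≥0∞), fun f hf => ?_⟩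
  rw [hμ' f hf]
  conv_lhs => rw [hs]
  rw [lintegral_smul_measure]
  rfl

lemma volume_unitBox (d : ℕ) : (volume : Measure (Vec d)) (unitBox d) = 1 := by
  rw [unitBox, volume_pi_pi]
  simp

/-- explicit construction of the Palm measure.  Let `Φ` be a stationary
random measure on `ℝ^d` with intensity `λ_Φ ∈ (0,∞)`, and let `h : ℝ^d × ℝ^d → [0,∞]` be
measurable, translation-invariant (`h (x+t) (y+t) = h x y`) with `∫ h x y dx = 1` for every
`y`.  Then `λ_Φ = E[∫ h 0 z dΦ(z)]`, and every σ-finite measure `Q` disintegrating the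
Campbell measure satisfies `Q(B) = E[∫ 1_B(T_z Φ) · h 0 z dΦ(z)]` for all measurable `B`. -/
theorem stmt13 {d : ℕ} {Ω : Type*} [MeasurableSpace Ω] (P : Measure Ω) [IsProbabilityMeasure P]
    (Φ : Ω → Measure (Vec d)) (hΦm : Measurable Φ)
    (hbf : ∀ᵐ ω ∂P, BddFinite (Φ ω))
    (hstat : ∀ t : Vec d, P.map (fun ω => shiftM t (Φ ω)) = P.map Φ)
    (hpos : 0 < ∫⁻ ω, Φ ω (unitBox d) ∂P)
    (hfin : (∫⁻ ω, Φ ω (unitBox d) ∂P) < ⊤)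
    (h : Vec d → Vec d → ℝ≥0∞)
    (hhm : Measurable (fun p : Vec d × Vec d => h p.1 p.2))
    (hhinv : ∀ x y t : Vec d, h (x + t) (y + t) = h x y)
    (hh1 : ∀ y : Vec d, ∫⁻ x, h x y ∂(volume : Measure (Vec d)) = 1) :
    (∫⁻ ω, Φ ω (unitBox d) ∂P = ∫⁻ ω, (∫⁻ z, h 0 z ∂(Φ ω)) ∂P) ∧
    ∀ Q : Measure (Measure (Vec d)), SigmaFinite Q →
      (∀ g : Vec d → Measure (Vec d) → ℝ≥0∞,
        Measurable (fun p : Vec d × Measure (Vec d) => g p.1 p.2) →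
        ∫⁻ ω, (∫⁻ x, g x (shiftM x (Φ ω)) ∂(Φ ω)) ∂P
          = ∫⁻ x, (∫⁻ ψ, g x ψ ∂Q) ∂(volume : Measure (Vec d))) →
      ∀ B : Set (Measure (Vec d)), MeasurableSet B →
        Q B = ∫⁻ ω, (∫⁻ z, B.indicator (fun _ => (1 : ℝ≥0∞)) (shiftM z (Φ ω)) * h 0 z
          ∂(Φ ω)) ∂P := by
  have hbox : MeasurableSet (unitBox d) :=
    MeasurableSet.univ_pi fun _ => measurableSet_Ico
  have hh0 : Measurable fun z => h 0 z := hhm.comp measurable_prodMk_left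
  have hint0 : ∫⁻ z, h 0 z ∂(volume : Measure (Vec d)) = 1 := by
    rw [← hh1 0, ← lintegral_neg_eq_self (μ := (volume : Measure (Vec d))) (fun x => h x 0)]
    refine lintegral_congr fun z => ?_
    have := hhinv (-z) 0 z
    simpa using this
  have key : ∀ B : Set (Measure (Vec d)), MeasurableSet B →
      ∫⁻ ω, (∫⁻ z, B.indicator (fun _ => (1 : ℝ≥0∞)) (shiftM z (Φ ω)) *
        (unitBox d).indicator 1 z ∂(Φ ω)) ∂P
      = ∫⁻ ω, (∫⁻ z, B.indicator (fun _ => (1 : ℝ≥0∞)) (shiftM z (Φ ω)) * h 0 z ∂(Φ ω)) ∂P := by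
    intro B hB
    obtain ⟨c, hc⟩ := palm_key P Φ hΦm hbf hstat hfin B hB
    rw [hc _ (measurable_one.indicator hbox), hc _ hh0, hint0, lintegral_indicator_one hbox,
      volume_unitBox]
  refine ⟨?_, fun Q _ hQ B hB => ?_⟩
  · have := key Set.univ MeasurableSet.univ
    simpa [lintegral_indicator_one hbox] using this
  · rw [← key B hB]
    have := hQ (fun x ψ => B.indicator (fun _ => (1 : ℝ≥0∞)) ψ * (unitBox d).indicator 1 x)
      (((measurable_const.indicator hB).comp measurable_snd).mul
        ((measurable_one.indicator hbox).comp measurable_fst))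
    rw [this]
    have e : ∀ x : Vec d, ∫⁻ ψ, B.indicator (fun _ => (1 : ℝ≥0∞)) ψ *
        (unitBox d).indicator 1 x ∂Q = Q B * (unitBox d).indicator 1 x := by
      intro x
      rw [lintegral_mul_const _ (measurable_const.indicator hB), lintegral_indicator_const hB,
        one_mul]
    simp only [e]
    rw [lintegral_const_mul _ (measurable_one.indicator hbox), lintegral_indicator_one hbox,
      volume_unitBox, mul_one]
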